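/- arXiv:2007.10664 — 3 statements merged into one kernel-verified Lean document; each statement's English description precedes it below -/
import Mathlib

section
/- The following two suprema coincide: sSup { ∑ᵢ ω i ⟪xᵢ, y⟫ : x : ι → H with xᵢ ∈ Mᵢ and ‖xᵢ‖ ≤ 1 for all i, the (absolutely convergent) series ∑ᵢ ω i • xᵢ lies in M^⊥, and y ∈ M^⊥ with ‖y‖ ≤ 1 } = sSup { ∑ᵢ ω i ⟪xᵢ, y⟫ : x : ι → H with xᵢ ∈ Mᵢ ∩ M^⊥ and ‖xᵢ‖ ≤ 1 for all i, and y ∈ M^⊥ with ‖y‖ ≤ 1 }. (The left-hand supremum is the configuration constant between the product subspace C_ω = ∏ᵢ Mᵢ and the diagonal D_ω in the ω-weighted ℓ² product space over H.) -/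
open RealInnerProductSpace

/-!
Let `N = ⨅ j, M j`. Since `N ≤ M i`, the orthogonal projection onto `Nᗮ` maps each `M i` into
`M i ⊓ Nᗮ`; it does not increase norms, and it leaves every `⟪x i, y⟫` with `y ∈ Nᗮ` unchanged.
Projecting the components of an admissible family therefore preserves the value of the series.
Conversely, a series with terms in the closed subspace `Nᗮ` has its sum there. So already the two
sets of values coincide.
-/

theorem completeSpace_iInf_submodule {R E : Type*} {ι : Sort*} [Semiring R] [AddCommMonoid E]
    [Module R E] [UniformSpace E] [T0Space E] [CompleteSpace E] (M : ι → Submodule R E)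
    [hM : ∀ i, CompleteSpace (M i)] : CompleteSpace (⨅ i, M i : Submodule R E) := by
  have isClosed_iInf : IsClosed ((⨅ i, M i : Submodule R E) : Set E) := by
    rw [Submodule.coe_iInf]
    exact isClosed_iInter fun i => (completeSpace_coe_iff_isComplete.mp (hM i)).isClosed
  exact isClosed_iInf.completeSpace_coe

theorem summable_smul_of_norm_le {𝕜 E ι : Type*} [NormedField 𝕜] [SeminormedAddCommGroup E]
    [NormedSpace 𝕜 E] [CompleteSpace E] {ω : ι → 𝕜} {x : ι → E} {C : ℝ}
    (hω : Summable fun i => ‖ω i‖) (hx : ∀ i, ‖x i‖ ≤ C) : Summable fun i => ω i • x i :=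
  .of_norm_bounded (hω.mul_right C) fun i => by
    rw [norm_smul]
    gcongr
    exact hx i

section Projection

variable {𝕜 H : Type*} [RCLike 𝕜] [NormedAddCommGroup H] [InnerProductSpace 𝕜 H]
  {K N : Submodule 𝕜 H}

theorem inner_starProjection_left_of_mem [K.HasOrthogonalProjection] (x : H) {y : H}
    (hy : y ∈ K) : inner 𝕜 (K.starProjection x) y = inner 𝕜 x y := by
  rw [K.inner_starProjection_left_eq_right, Submodule.starProjection_eq_self_iff.mpr hy]

theorem starProjection_orthogonal_mem_inf [N.HasOrthogonalProjection] (hNK : N ≤ K) {x : H}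
    (hx : x ∈ K) : Nᗮ.starProjection x ∈ K ⊓ Nᗮ := by
  refine ⟨?_, Nᗮ.starProjection_apply_mem x⟩
  rw [N.starProjection_orthogonal_val]
  exact K.sub_mem hx (hNK (N.starProjection_apply_mem x))

end Projection

theorem stmt_5_general {𝕜 H ι : Type*} [RCLike 𝕜] [NormedAddCommGroup H]
    [InnerProductSpace 𝕜 H] [CompleteSpace H] {ω : ι → 𝕜} (hω : Summable ω)
    {M : ι → Submodule 𝕜 H} {N : Submodule 𝕜 H} [N.HasOrthogonalProjection]
    (hNM : ∀ i, N ≤ M i) :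
    { r : 𝕜 | ∃ (x : ι → H) (y : H),
      (∀ i, x i ∈ M i) ∧ (∀ i, ‖x i‖ ≤ 1) ∧
      (Summable fun i => ω i • x i) ∧ (∑' i, ω i • x i) ∈ Nᗮ ∧
      y ∈ Nᗮ ∧ ‖y‖ ≤ 1 ∧ r = ∑' i, ω i * inner 𝕜 (x i) y } =
    { r : 𝕜 | ∃ (x : ι → H) (y : H),
      (∀ i, x i ∈ M i ⊓ Nᗮ) ∧ (∀ i, ‖x i‖ ≤ 1) ∧
      y ∈ Nᗮ ∧ ‖y‖ ≤ 1 ∧ r = ∑' i, ω i * inner 𝕜 (x i) y } := by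
  ext r
  constructor
  · rintro ⟨x, y, hxM, hx_norm, -, -, hy, hy_norm, rfl⟩
    refine ⟨fun i => Nᗮ.starProjection (x i), y,
      fun i => starProjection_orthogonal_mem_inf (hNM i) (hxM i),
      fun i => (Nᗮ.norm_starProjection_apply_le (x i)).trans (hx_norm i), hy, hy_norm, ?_⟩
    simp only [inner_starProjection_left_of_mem _ hy]
  · rintro ⟨x, y, hx, hx_norm, hy, hy_norm, rfl⟩
    have sum_mem : ∑' i, ω i • x i ∈ Nᗮ :=
      tsum_mem N.isClosed_orthogonal fun i => Nᗮ.smul_mem (ω i) (hx i).2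
    exact ⟨x, y, fun i => (hx i).1, hx_norm, summable_smul_of_norm_le hω.norm hx_norm,
      sum_mem, hy, hy_norm, rfl⟩

/-- The supremum defining the configuration constant between the
product space `∏ᵢ Mᵢ` and the diagonal (left-hand side) equals the supremum
taken over families with components in `Mᵢ ∩ M^⊥` (right-hand side). -/
theorem stmt_5 {H : Type*} [NormedAddCommGroup H] [InnerProductSpace ℝ H] [CompleteSpace H]
    {ι : Type*} [Countable ι] [Nonempty ι]
    (ω : ι → ℝ) (hω : ∀ i, 0 < ω i) (hωsum : HasSum ω 1)
    (M : ι → Submodule ℝ H) [∀ i, CompleteSpace (M i)]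
    (hMnt : ∀ i, M i ≠ ⊥) :
    sSup { r : ℝ | ∃ (x : ι → H) (y : H),
      (∀ i, x i ∈ M i) ∧ (∀ i, ‖x i‖ ≤ 1) ∧
      (Summable fun i => ω i • x i) ∧ (∑' i, ω i • x i) ∈ (⨅ j, M j : Submodule ℝ H)ᗮ ∧
      y ∈ (⨅ j, M j : Submodule ℝ H)ᗮ ∧ ‖y‖ ≤ 1 ∧
      r = ∑' i, ω i * ⟪x i, y⟫ } =
    sSup { r : ℝ | ∃ (x : ι → H) (y : H),
      (∀ i, x i ∈ M i ⊓ (⨅ j, M j : Submodule ℝ H)ᗮ) ∧ (∀ i, ‖x i‖ ≤ 1) ∧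
      y ∈ (⨅ j, M j : Submodule ℝ H)ᗮ ∧ ‖y‖ ≤ 1 ∧
      r = ∑' i, ω i * ⟪x i, y⟫ } := by
  have := completeSpace_iInf_submodule M
  exact congrArg sSup (stmt_5_general hωsum.summable (iInf_le M))
end

section
/- Let J be a nonempty countable index set, let {I_j}_{j ∈ J} be a family of nonempty pairwise disjoint subsets of ι with ⋃_{j∈J} I_j = ι, let L_j ⊆ H (j ∈ J) be nontrivial closed linear subspaces such that Mᵢ = L_j for every i ∈ I_j, and set λ_j := ∑_{i ∈ I_j} ω i, so that λ : J → ℝ is a weight family with λ_j > 0 and ∑_j λ_j = 1 and ⋂_j L_j = M. Then the Friedrichs cosine computed from the family (L_j)_{j∈J} with weights λ equals c_ω, and the configuration constant computed from (L_j)_{j∈J} with weights λ equals κ_ω. -/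
open RealInnerProductSpace

/-- The cosine of the Friedrichs angle between the product subspace `∏ᵢ Mᵢ` and the
diagonal in the weighted `ℓ²` product space, expressed intrinsically in `H`. -/
noncomputable def friedrichsCos {H : Type*} [NormedAddCommGroup H] [InnerProductSpace ℝ H]
    {ι : Type*} (ω : ι → ℝ) (M : ι → Submodule ℝ H) : ℝ :=
  sSup { r : ℝ | ∃ (x : ι → H) (y : H),
    (∀ i, x i ∈ M i ⊓ (⨅ j, M j)ᗮ) ∧
    (Summable fun i => ω i * ‖x i‖ ^ 2) ∧ (∑' i, ω i * ‖x i‖ ^ 2) ≤ 1 ∧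
    y ∈ (⨅ j, M j)ᗮ ∧ ‖y‖ ≤ 1 ∧
    r = ∑' i, ω i * ⟪x i, y⟫ }

/-- The configuration constant between the product subspace `∏ᵢ Mᵢ` and the diagonal
in the weighted `ℓ²` product space, expressed intrinsically in `H`. -/
noncomputable def configConst {H : Type*} [NormedAddCommGroup H] [InnerProductSpace ℝ H]
    {ι : Type*} (ω : ι → ℝ) (M : ι → Submodule ℝ H) : ℝ :=
  sSup { r : ℝ | ∃ (x : ι → H) (y : H),
    (∀ i, x i ∈ M i ⊓ (⨅ j, M j)ᗮ) ∧ (∀ i, ‖x i‖ ≤ 1) ∧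
    y ∈ (⨅ j, M j)ᗮ ∧ ‖y‖ ≤ 1 ∧
    r = ∑' i, ω i * ⟪x i, y⟫ }

/-!
Lift a family `(x_j)` on `J` to `ι` by repeating `x_j` along the block `I_j`: this changes neither
the weighted sums nor the norm constraints. Conversely, replace the part of a family `(xᵢ)` lying
in `I_j` by its weighted average: the pairing with `y` is kept, while the norm constraints can only
improve, by Cauchy–Schwarz in the `ℓ²` case and by the triangle inequality in the uniform case.
Averaging only finitely many `xᵢ` at a time keeps the averages inside `L_j`, whether or not the
full series converges there, and still reaches every value of the pairing in the limit, hence the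
same supremum.
-/

lemma sSup_eq_of_subset_of_subset_closure {s t : Set ℝ} (hst : s ⊆ t) (hts : t ⊆ closure s) :
    sSup s = sSup t := by
  obtain rfl | hs := s.eq_empty_or_nonempty
  · rw [closure_empty] at hts
    rw [Set.subset_empty_iff.1 hts]
  by_cases hbdd : BddAbove s
  · have hlub : IsLUB t (sSup s) :=
      (isLUB_iff_of_subset_of_subset_closure hst hts).1 (isLUB_csSup hs hbdd)
    exact (hlub.csSup_eq (hs.mono hst)).symm
  · rw [Real.sSup_of_not_bddAbove hbdd, Real.sSup_of_not_bddAbove fun ht => hbdd (ht.mono hst)]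

section PushWeight

variable {ι J : Type*} {f : ι → J} {ω : ι → ℝ}

/-- The push-forward of a weight family along `f`: the weight of `j` is the total weight of the
fibre of `f` over `j`. Along the map sending each index to its block, it is the family `λ`. -/
noncomputable def pushWeight (f : ι → J) (ω : ι → ℝ) (j : J) : ℝ :=
  ∑' i : f ⁻¹' {j}, ω i

lemma pushWeight_nonneg (hω : ∀ i, 0 ≤ ω i) (j : J) : 0 ≤ pushWeight f ω j :=
  tsum_nonneg fun i => hω i

lemma sum_fiber_le_pushWeight [DecidableEq J] (hω : ∀ i, 0 ≤ ω i) (hsum : Summable ω)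
    (s : Finset ι) (j : J) : ∑ i ∈ s with f i = j, ω i ≤ pushWeight f ω j :=
  calc ∑ i ∈ s with f i = j, ω i = ∑ i ∈ s, (f ⁻¹' {j}).indicator ω i := by
        classical simp [Finset.sum_filter, Set.indicator_apply]
    _ ≤ ∑' i, (f ⁻¹' {j}).indicator ω i :=
        (hsum.indicator _).sum_le_tsum s fun i _ => Set.indicator_nonneg (fun k _ => hω k) i
    _ = pushWeight f ω j := (tsum_subtype _ ω).symm

lemma eq_zero_of_pushWeight_eq_zero (hω : ∀ i, 0 ≤ ω i) (hsum : Summable ω) {i : ι}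
    (h : pushWeight f ω (f i) = 0) : ω i = 0 := by
  have hle : ω i ≤ pushWeight f ω (f i) :=
    (hsum.subtype (f ⁻¹' {f i})).le_tsum ⟨i, rfl⟩ fun k _ => hω k.1
  exact (hle.trans_eq h).antisymm (hω i)

lemma tsum_fiber_mul_comp (g : J → ℝ) (j : J) :
    ∑' i : f ⁻¹' {j}, ω i * g (f i) = pushWeight f ω j * g j := by
  rw [pushWeight, ← tsum_mul_right]
  exact tsum_congr fun i => by rw [show f i = j from i.2]

lemma summable_mul_comp_iff (hω : ∀ i, 0 ≤ ω i) (hsum : Summable ω) (g : J → ℝ) :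
    (Summable fun i => ω i * g (f i)) ↔ Summable fun j => pushWeight f ω j * g j := by
  have hblock (j : J) : Summable fun i : f ⁻¹' {j} => ω i * |g (f i)| :=
    ((hsum.subtype _).mul_right |g j|).congr fun i => by
      rw [show f i = j from i.2, Function.comp_apply]
  have habs : (Summable fun i => ω i * |g (f i)|) ↔ Summable fun j => pushWeight f ω j * |g j| := by
    rw [summable_partition (fun i => mul_nonneg (hω i) (abs_nonneg _))
      (s := fun j => f ⁻¹' {j}) fun i => ⟨f i, rfl, fun _ h => h.symm⟩, and_iff_right hblock]
    simp only [tsum_fiber_mul_comp fun j => |g j|]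
  rw [← summable_abs_iff, ← summable_abs_iff (f := fun j => _ * _)]
  simpa only [abs_mul, abs_of_nonneg (hω _), abs_of_nonneg (pushWeight_nonneg hω _)] using habs

lemma tsum_pushWeight_mul (hω : ∀ i, 0 ≤ ω i) (hsum : Summable ω) (g : J → ℝ) :
    ∑' j, pushWeight f ω j * g j = ∑' i, ω i * g (f i) := by
  by_cases hg : Summable fun i => ω i * g (f i)
  · simpa only [tsum_fiber_mul_comp] using (hg.hasSum.tsum_fiberwise f).tsum_eq
  · rw [tsum_eq_zero_of_not_summable hg,
      tsum_eq_zero_of_not_summable (mt (summable_mul_comp_iff hω hsum g).2 hg)]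

end PushWeight

section FiberAverage

lemma hasSum_sum_fiber {ι J A : Type*} [DecidableEq J] [AddCommMonoid A] [TopologicalSpace A]
    [ContinuousAdd A] (f : ι → J) (s : Finset ι) (g : ι → A) :
    HasSum (fun j => ∑ i ∈ s with f i = j, g i) (∑ i ∈ s, g i) := by
  simp only [Finset.sum_filter, eq_comm (a := f _)]
  exact hasSum_sum fun i _ => hasSum_ite_eq (f i) (g i)

lemma norm_sum_smul_le {ι E : Type*} [SeminormedAddCommGroup E] [NormedSpace ℝ E] {ω : ι → ℝ}
    {s : Finset ι} (hω : ∀ i ∈ s, 0 ≤ ω i) (x : ι → E) :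
    ‖∑ i ∈ s, ω i • x i‖ ≤ ∑ i ∈ s, ω i * ‖x i‖ :=
  norm_sum_le_of_le s fun i hi => by rw [norm_smul, Real.norm_of_nonneg (hω i hi)]

lemma norm_sum_smul_sq_le {ι E : Type*} [SeminormedAddCommGroup E] [NormedSpace ℝ E] {ω : ι → ℝ}
    {s : Finset ι} (hω : ∀ i ∈ s, 0 ≤ ω i) (x : ι → E) :
    ‖∑ i ∈ s, ω i • x i‖ ^ 2 ≤ (∑ i ∈ s, ω i) * ∑ i ∈ s, ω i * ‖x i‖ ^ 2 :=
  calc ‖∑ i ∈ s, ω i • x i‖ ^ 2 ≤ (∑ i ∈ s, ω i * ‖x i‖) ^ 2 := by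
        gcongr
        exact norm_sum_smul_le hω x
    _ ≤ (∑ i ∈ s, ω i) * ∑ i ∈ s, ω i * ‖x i‖ ^ 2 :=
        Finset.sum_sq_le_sum_mul_sum_of_sq_le_mul s hω
          (fun i hi => mul_nonneg (hω i hi) (sq_nonneg _)) fun i _ => le_of_eq (by ring)

lemma summable_mul_norm_sq_of_norm_le_one {ι E : Type*} [SeminormedAddCommGroup E] {ω : ι → ℝ}
    (hω : ∀ i, 0 ≤ ω i) (hsum : Summable ω) {x : ι → E} (hx : ∀ i, ‖x i‖ ≤ 1) :
    Summable fun i => ω i * ‖x i‖ ^ 2 :=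
  hsum.of_nonneg_of_le (fun i => mul_nonneg (hω i) (sq_nonneg _)) fun i =>
    mul_le_of_le_one_right (hω i) (pow_le_one₀ (norm_nonneg _) (hx i))

variable {ι J E : Type*} [DecidableEq J] {f : ι → J} {ω : ι → ℝ}

/-- The `ω`-weighted average of `x` over the fibre of `f` above `j`, with the terms outside the
finite set `s` replaced by `0`: the sum is truncated to `s`, but the normalisation is by the whole
weight of the fibre. It is `0` on fibres of weight `0`. -/
noncomputable def fiberAverage [AddCommGroup E] [Module ℝ E] (f : ι → J) (ω : ι → ℝ)
    (s : Finset ι) (x : ι → E) (j : J) : E :=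
  (pushWeight f ω j)⁻¹ • ∑ i ∈ s with f i = j, ω i • x i

lemma fiberAverage_mem [AddCommGroup E] [Module ℝ E] {K : J → Submodule ℝ E} {x : ι → E}
    (hx : ∀ i, x i ∈ K (f i)) (s : Finset ι) (j : J) : fiberAverage f ω s x j ∈ K j := by
  refine (K j).smul_mem _ ((K j).sum_mem fun i hi => (K j).smul_mem _ ?_)
  exact (Finset.mem_filter.1 hi).2 ▸ hx i

lemma pushWeight_smul_fiberAverage [AddCommGroup E] [Module ℝ E] (hω : ∀ i, 0 ≤ ω i)
    (hsum : Summable ω) (s : Finset ι) (x : ι → E) (j : J) :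
    pushWeight f ω j • fiberAverage f ω s x j = ∑ i ∈ s with f i = j, ω i • x i := by
  by_cases hj : pushWeight f ω j = 0
  · rw [hj, zero_smul, Finset.sum_eq_zero]
    intro i hi
    obtain rfl := (Finset.mem_filter.1 hi).2
    rw [eq_zero_of_pushWeight_eq_zero hω hsum hj, zero_smul]
  · exact smul_inv_smul₀ hj _

lemma norm_fiberAverage_le_one [SeminormedAddCommGroup E] [NormedSpace ℝ E] (hω : ∀ i, 0 ≤ ω i)
    (hsum : Summable ω) {x : ι → E} (hx : ∀ i, ‖x i‖ ≤ 1) (s : Finset ι) (j : J) :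
    ‖fiberAverage f ω s x j‖ ≤ 1 := by
  have hW := pushWeight_nonneg (f := f) hω j
  have hle : ‖∑ i ∈ s with f i = j, ω i • x i‖ ≤ pushWeight f ω j :=
    calc ‖∑ i ∈ s with f i = j, ω i • x i‖ ≤ ∑ i ∈ s with f i = j, ω i * ‖x i‖ :=
          norm_sum_smul_le (fun i _ => hω i) x
      _ ≤ ∑ i ∈ s with f i = j, ω i :=
          Finset.sum_le_sum fun i _ => mul_le_of_le_one_right (hω i) (hx i)
      _ ≤ pushWeight f ω j := sum_fiber_le_pushWeight hω hsum s j
  rw [fiberAverage, norm_smul, norm_inv, Real.norm_of_nonneg hW]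
  exact inv_mul_le_one_of_le₀ hle hW

lemma pushWeight_mul_norm_fiberAverage_sq_le [SeminormedAddCommGroup E] [NormedSpace ℝ E]
    (hω : ∀ i, 0 ≤ ω i) (hsum : Summable ω) (x : ι → E) (s : Finset ι) (j : J) :
    pushWeight f ω j * ‖fiberAverage f ω s x j‖ ^ 2 ≤ ∑ i ∈ s with f i = j, ω i * ‖x i‖ ^ 2 := by
  have henergy : 0 ≤ ∑ i ∈ s with f i = j, ω i * ‖x i‖ ^ 2 :=
    Finset.sum_nonneg fun i _ => mul_nonneg (hω i) (sq_nonneg _)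
  obtain hW | hW := (pushWeight_nonneg (f := f) hω j).eq_or_lt
  · rwa [← hW, zero_mul]
  refine le_of_mul_le_mul_left ?_ hW
  calc pushWeight f ω j * (pushWeight f ω j * ‖fiberAverage f ω s x j‖ ^ 2)
      = ‖∑ i ∈ s with f i = j, ω i • x i‖ ^ 2 := by
        rw [← pushWeight_smul_fiberAverage hω hsum, norm_smul, Real.norm_of_nonneg hW.le]
        ring
    _ ≤ (∑ i ∈ s with f i = j, ω i) * ∑ i ∈ s with f i = j, ω i * ‖x i‖ ^ 2 :=
        norm_sum_smul_sq_le (fun i _ => hω i) x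
    _ ≤ pushWeight f ω j * ∑ i ∈ s with f i = j, ω i * ‖x i‖ ^ 2 := by
        gcongr
        exact sum_fiber_le_pushWeight hω hsum s j

lemma tsum_pushWeight_mul_inner_fiberAverage [SeminormedAddCommGroup E] [InnerProductSpace ℝ E]
    (hω : ∀ i, 0 ≤ ω i) (hsum : Summable ω) (s : Finset ι) (x : ι → E) (y : E) :
    ∑' j, pushWeight f ω j * ⟪fiberAverage f ω s x j, y⟫ = ∑ i ∈ s, ω i * ⟪x i, y⟫ := by
  have hblock (j : J) : pushWeight f ω j * ⟪fiberAverage f ω s x j, y⟫ =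
      ∑ i ∈ s with f i = j, ω i * ⟪x i, y⟫ := by
    rw [← real_inner_smul_left, pushWeight_smul_fiberAverage hω hsum, sum_inner]
    simp only [real_inner_smul_left]
  simpa only [hblock] using (hasSum_sum_fiber f s fun i => ω i * ⟪x i, y⟫).tsum_eq

end FiberAverage

section Pairing

variable {ι J H : Type*} [NormedAddCommGroup H] [InnerProductSpace ℝ H] {f : ι → J} {ω : ι → ℝ}

/-- The values of the weighted pairing `∑ᵢ ω i ⟪xᵢ, y⟫` as `x` runs over a set `X` of families and
`y` over a set `Y` of vectors. Both constants are suprema of such sets. -/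
def pairingValues (ω : ι → ℝ) (X : Set (ι → H)) (Y : Set H) : Set ℝ :=
  Set.image2 (fun x y => ∑' i, ω i * ⟪x i, y⟫) X Y

/-- The unit ball of the `ω`-weighted `ℓ²` sum of the subspaces `K i`. -/
def weightedUnitBall (ω : ι → ℝ) (K : ι → Submodule ℝ H) : Set (ι → H) :=
  {x | (∀ i, x i ∈ K i) ∧ (Summable fun i => ω i * ‖x i‖ ^ 2) ∧ ∑' i, ω i * ‖x i‖ ^ 2 ≤ 1}

/-- The families of vectors of norm at most one in the subspaces `K i`, that is, the unit ball of
their `ℓ^∞` sum. -/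
def uniformUnitBall (K : ι → Submodule ℝ H) : Set (ι → H) :=
  {x | (∀ i, x i ∈ K i) ∧ ∀ i, ‖x i‖ ≤ 1}

lemma friedrichsCos_eq_sSup_pairingValues (ω : ι → ℝ) (M : ι → Submodule ℝ H) :
    friedrichsCos ω M = sSup (pairingValues ω
      (weightedUnitBall ω fun i => M i ⊓ (⨅ j, M j)ᗮ) {y | y ∈ (⨅ j, M j)ᗮ ∧ ‖y‖ ≤ 1}) := by
  unfold friedrichsCos pairingValues weightedUnitBall
  congr 1
  ext r
  simp only [Set.mem_image2, Set.mem_ofPred_eq, and_assoc, exists_and_left, eq_comm (a := r)]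

lemma configConst_eq_sSup_pairingValues (ω : ι → ℝ) (M : ι → Submodule ℝ H) :
    configConst ω M = sSup (pairingValues ω
      (uniformUnitBall fun i => M i ⊓ (⨅ j, M j)ᗮ) {y | y ∈ (⨅ j, M j)ᗮ ∧ ‖y‖ ≤ 1}) := by
  unfold configConst pairingValues uniformUnitBall
  congr 1
  ext r
  simp only [Set.mem_image2, Set.mem_ofPred_eq, and_assoc, exists_and_left, eq_comm (a := r)]

lemma summable_mul_inner (hω : ∀ i, 0 ≤ ω i) (hsum : Summable ω) {x : ι → H}
    (hx : Summable fun i => ω i * ‖x i‖ ^ 2) (y : H) : Summable fun i => ω i * ⟪x i, y⟫ := by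
  refine Summable.of_norm_bounded (hx.add (hsum.mul_right (‖y‖ ^ 2))) fun i => ?_
  rw [norm_mul, Real.norm_of_nonneg (hω i), ← mul_add]
  refine mul_le_mul_of_nonneg_left ((norm_inner_le_norm (x i) y).trans ?_) (hω i)
  nlinarith [sq_nonneg (‖x i‖ - ‖y‖), sq_nonneg ‖x i‖, sq_nonneg ‖y‖]

lemma comp_mem_weightedUnitBall (hω : ∀ i, 0 ≤ ω i) (hsum : Summable ω) {K : J → Submodule ℝ H}
    {x : J → H} (hx : x ∈ weightedUnitBall (pushWeight f ω) K) :
    x ∘ f ∈ weightedUnitBall ω (K ∘ f) := by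
  obtain ⟨hxK, hxs, hx1⟩ := hx
  refine ⟨fun i => hxK (f i), (summable_mul_comp_iff hω hsum fun j => ‖x j‖ ^ 2).2 hxs, ?_⟩
  rwa [tsum_pushWeight_mul hω hsum fun j => ‖x j‖ ^ 2] at hx1

lemma fiberAverage_mem_weightedUnitBall [DecidableEq J] (hω : ∀ i, 0 ≤ ω i) (hsum : Summable ω)
    {K : J → Submodule ℝ H} {x : ι → H} (hx : x ∈ weightedUnitBall ω (K ∘ f)) (s : Finset ι) :
    fiberAverage f ω s x ∈ weightedUnitBall (pushWeight f ω) K := by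
  obtain ⟨hxK, hxs, hx1⟩ := hx
  have hfib := hasSum_sum_fiber f s fun i => ω i * ‖x i‖ ^ 2
  have hle := pushWeight_mul_norm_fiberAverage_sq_le (f := f) hω hsum x s
  have hsummable : Summable fun j => pushWeight f ω j * ‖fiberAverage f ω s x j‖ ^ 2 :=
    hfib.summable.of_nonneg_of_le
      (fun j => mul_nonneg (pushWeight_nonneg hω j) (sq_nonneg _)) hle
  refine ⟨fiberAverage_mem (f := f) hxK s, hsummable, ?_⟩
  calc ∑' j, pushWeight f ω j * ‖fiberAverage f ω s x j‖ ^ 2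
      ≤ ∑ i ∈ s, ω i * ‖x i‖ ^ 2 := hasSum_le hle hsummable.hasSum hfib
    _ ≤ ∑' i, ω i * ‖x i‖ ^ 2 := hxs.sum_le_tsum s fun i _ => mul_nonneg (hω i) (sq_nonneg _)
    _ ≤ 1 := hx1

lemma sSup_pairingValues_pushWeight [DecidableEq J] (hω : ∀ i, 0 ≤ ω i) (hsum : Summable ω)
    {X : Set (ι → H)} {X' : Set (J → H)} (Y : Set H) (hcomp : ∀ x ∈ X', x ∘ f ∈ X)
    (havg : ∀ x ∈ X, ∀ s, fiberAverage f ω s x ∈ X')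
    (hX : ∀ x ∈ X, Summable fun i => ω i * ‖x i‖ ^ 2) :
    sSup (pairingValues (pushWeight f ω) X' Y) = sSup (pairingValues ω X Y) := by
  refine sSup_eq_of_subset_of_subset_closure ?_ ?_
  · rintro _ ⟨x, hx, y, hy, rfl⟩
    exact ⟨x ∘ f, hcomp x hx, y, hy, (tsum_pushWeight_mul hω hsum fun j => ⟪x j, y⟫).symm⟩
  · rintro _ ⟨x, hx, y, hy, rfl⟩
    have hlim := (summable_mul_inner hω hsum (hX x hx) y).hasSum
    refine mem_closure_of_tendsto hlim (.of_forall fun s => ?_)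
    exact ⟨fiberAverage f ω s x, havg x hx s, y, hy,
      tsum_pushWeight_mul_inner_fiberAverage hω hsum s x y⟩

theorem friedrichsCos_pushWeight (hf : f.Surjective) (hω : ∀ i, 0 ≤ ω i) (hsum : Summable ω)
    (L : J → Submodule ℝ H) : friedrichsCos (pushWeight f ω) L = friedrichsCos ω (L ∘ f) := by
  classical
  simp only [friedrichsCos_eq_sSup_pairingValues, Function.comp_apply, hf.iInf_comp]
  exact sSup_pairingValues_pushWeight hω hsum _
    (fun _ => comp_mem_weightedUnitBall hω hsum)
    (fun _ => fiberAverage_mem_weightedUnitBall (K := fun j => L j ⊓ (⨅ k, L k)ᗮ) hω hsum)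
    fun _ hx => hx.2.1

theorem configConst_pushWeight (hf : f.Surjective) (hω : ∀ i, 0 ≤ ω i) (hsum : Summable ω)
    (L : J → Submodule ℝ H) : configConst (pushWeight f ω) L = configConst ω (L ∘ f) := by
  classical
  simp only [configConst_eq_sSup_pairingValues, Function.comp_apply, hf.iInf_comp]
  exact sSup_pairingValues_pushWeight hω hsum _
    (fun _ hx => ⟨fun i => hx.1 (f i), fun i => hx.2 (f i)⟩)
    (fun _ hx s => ⟨fiberAverage_mem hx.1 s, norm_fiberAverage_le_one hω hsum hx.2 s⟩)
    fun _ hx => summable_mul_norm_sq_of_norm_le_one hω hsum hx.2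

end Pairing

theorem stmt_8_general {H : Type*} [NormedAddCommGroup H] [InnerProductSpace ℝ H] {ι J : Type*}
    {ω : ι → ℝ} (hω : ∀ i, 0 ≤ ω i) (hsum : Summable ω) {M : ι → Submodule ℝ H}
    {I : J → Set ι} (hIne : ∀ j, (I j).Nonempty)
    (hIdisj : ∀ j j', j ≠ j' → Disjoint (I j) (I j')) (hIcover : (⋃ j, I j) = Set.univ)
    {L : J → Submodule ℝ H} (hML : ∀ j, ∀ i ∈ I j, M i = L j)
    {lam : J → ℝ} (hlam : ∀ j, lam j = ∑' i : (I j), ω i) :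
    friedrichsCos lam L = friedrichsCos ω M ∧ configConst lam L = configConst ω M := by
  let P : IndexedPartition I := .mk' I hIdisj hIne (Set.iUnion_eq_univ_iff.1 hIcover)
  have hsurj : P.index.Surjective := fun j => ⟨P.some j, P.index_some j⟩
  obtain rfl : M = L ∘ P.index := funext fun i => hML _ i (P.mem_index i)
  obtain rfl : lam = pushWeight P.index ω := funext fun j => by rw [hlam, P.eq j]; rfl
  exact ⟨friedrichsCos_pushWeight hsurj hω hsum L, configConst_pushWeight hsurj hω hsum L⟩

/-- Reduction to unique subspaces: if the family `(Mᵢ)` consists of the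
subspaces `L_j` repeated along a partition `(I_j)_{j∈J}` of `ι`, and
`λ_j = ∑_{i ∈ I_j} ω i`, then the Friedrichs cosine and the configuration constant
computed from `(L_j)` with weights `λ` coincide with `c_ω` and `κ_ω`. -/
theorem stmt_8 {H : Type*} [NormedAddCommGroup H] [InnerProductSpace ℝ H] [CompleteSpace H]
    {ι : Type*} [Countable ι] [Nonempty ι]
    (ω : ι → ℝ) (hω : ∀ i, 0 < ω i) (hωsum : HasSum ω 1)
    (M : ι → Submodule ℝ H) [∀ i, CompleteSpace (M i)]
    (hMnt : ∀ i, M i ≠ ⊥)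
    {J : Type*} [Countable J] [Nonempty J]
    (I : J → Set ι) (hIne : ∀ j, (I j).Nonempty)
    (hIdisj : ∀ j j', j ≠ j' → Disjoint (I j) (I j'))
    (hIcover : (⋃ j, I j) = Set.univ)
    (L : J → Submodule ℝ H) [∀ j, CompleteSpace (L j)]
    (hLnt : ∀ j, L j ≠ ⊥)
    (hML : ∀ j, ∀ i ∈ I j, M i = L j)
    (lam : J → ℝ) (hlam : ∀ j, lam j = ∑' i : (I j), ω i) :
    friedrichsCos lam L = friedrichsCos ω M ∧
    configConst lam L = configConst ω M :=
  stmt_8_general (fun i => (hω i).le) hωsum.summable hIne hIdisj hIcover hML hlam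
end

section
/- Fix the subspaces (Mᵢ)_{i∈ι}. If there exists a weight family λ : ι → ℝ (λ i > 0 for all i, ∑ᵢ λ i = 1) such that the set A_λ = { ∑ᵢ λ i • xᵢ : xᵢ ∈ Mᵢ^⊥ for all i, ∑ᵢ λ i ‖xᵢ‖² < ∞ } is closed in H, then for every weight family ω : ι → ℝ (ω i > 0 for all i, ∑ᵢ ω i = 1) the set A_ω = { ∑ᵢ ω i • xᵢ : xᵢ ∈ Mᵢ^⊥ for all i, ∑ᵢ ω i ‖xᵢ‖² < ∞ } is closed in H; in that case A_ω = M^⊥ for every such ω. -/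
open RealInnerProductSpace

/-!
Put `Nᵢ = Mᵢᗮ`. The set `A_λ` is the range of `T x = ∑ᵢ √λᵢ xᵢ` on the `ℓ²`-direct sum of the `Nᵢ`,
and by Cauchy–Schwarz the finite partial sums of this series converge to `T` in operator norm. If
the range of `T` is closed, the open mapping theorem makes it stable under small perturbations with
values in that range, so some finite partial sum already has range `A_λ`. Hence `A_λ` is the
algebraic sum `∑ᵢ Nᵢ`, which is therefore closed. Since `∑ᵢ Nᵢ ⊆ A_ω ⊆ closure (∑ᵢ Nᵢ)` for every
weight family `ω`, all the sets `A_ω` coincide with the closure of `∑ᵢ Nᵢ`, which is `Mᗮ`.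

With Hölder's inequality in place of Cauchy–Schwarz, the argument up to the last equality works for
`ℓᵖ`-sums, `1 < p < ∞`, of closed subspaces of a Banach space.
-/

open scoped Topology ENNReal

section Perturbation

variable {𝕜 E F : Type*} [NontriviallyNormedField 𝕜]
  [NormedAddCommGroup E] [NormedSpace 𝕜 E] [CompleteSpace E]
  [NormedAddCommGroup F] [NormedSpace 𝕜 F] [CompleteSpace F]

lemma eventually_range_eq_of_isClosed_range {f : E →L[𝕜] F} (hf : IsClosed (f.range : Set F)) :
    ∀ᶠ g in 𝓝 f, g.range ≤ f.range → g.range = f.range := by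
  have : CompleteSpace f.range := hf.completeSpace_coe
  let f₀ : E →L[𝕜] f.range := f.codRestrict f.range f.mem_range_self
  have hf₀ : f₀.range = ⊤ := LinearMap.range_rangeRestrict f.toLinearMap
  let r := f₀.nonlinearRightInverseOfSurjective hf₀
  have hr : 0 < r.nnnorm⁻¹ := inv_pos.2 (f₀.nonlinearRightInverseOfSurjective_nnnorm_pos hf₀)
  filter_upwards [Metric.ball_mem_nhds f hr] with g hg hgf
  let g₀ : E →L[𝕜] f.range := g.codRestrict f.range fun x ↦ hgf (g.mem_range_self x)
  have happrox : ApproximatesLinearOn g₀ f₀ Set.univ ‖g - f‖₊ := fun x _ y _ ↦ by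
    rw [← map_sub]
    exact (g - f).le_opNorm (x - y)
  have hopen : IsOpen (g₀.range : Set f.range) := by
    rw [LinearMap.coe_range, ← Set.image_univ]
    exact happrox.open_image r isOpen_univ (.inr (mem_ball_iff_norm.1 hg))
  have hg₀ : g₀.range = ⊤ :=
    g₀.range.eq_top_of_nonempty_interior' ⟨0, hopen.interior_eq.symm ▸ zero_mem g₀.range⟩
  refine le_antisymm hgf fun y hy ↦ ?_
  obtain ⟨x, hx⟩ : (⟨y, hy⟩ : f.range) ∈ g₀.range := hg₀ ▸ Submodule.mem_top
  exact ⟨x, congrArg Subtype.val hx⟩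

lemma range_eq_iSup_range_of_hasSum {ι : Type*} {f : ι → E →L[𝕜] F} {T : E →L[𝕜] F}
    (hT : HasSum f T) (hclosed : IsClosed (T.range : Set F)) (hle : ∀ i, (f i).range ≤ T.range) :
    T.range = ⨆ i, (f i).range := by
  refine le_antisymm ?_ (iSup_le hle)
  obtain ⟨s, hs⟩ := (hT.eventually (eventually_range_eq_of_isClosed_range hclosed)).exists
  have sum_range_le {K : Submodule 𝕜 F} (hK : ∀ i, (f i).range ≤ K) :
      (∑ i ∈ s, f i).range ≤ K := by
    rintro _ ⟨x, rfl⟩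
    simpa only [ContinuousLinearMap.coe_coe, sum_apply] using
      sum_mem fun i _ ↦ hK i ((f i).mem_range_self x)
  exact (hs (sum_range_le hle)).ge.trans (sum_range_le (le_iSup fun i ↦ (f i).range))

end Perturbation

section LpDirectSum

variable {𝕜 ι F : Type*} {E : ι → Type*} [NontriviallyNormedField 𝕜]
  [∀ i, NormedAddCommGroup (E i)] [∀ i, NormedSpace 𝕜 (E i)]
  [NormedAddCommGroup F] [NormedSpace 𝕜 F]
  {p : ℝ≥0∞} [Fact (1 ≤ p)] {q : ℝ} {L : ∀ i, E i →L[𝕜] F}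

lemma norm_sum_comp_evalCLM_le (hpq : p.toReal.HolderConjugate q) (s : Finset ι) :
    ‖∑ i ∈ s, L i ∘L lp.evalCLM 𝕜 E p i‖ ≤ (∑ i ∈ s, ‖L i‖ ^ q) ^ (1 / q) := by
  refine ContinuousLinearMap.opNorm_le_bound _ (by positivity) fun x ↦ ?_
  have hx : (∑ i ∈ s, ‖x i‖ ^ p.toReal) ^ (1 / p.toReal) ≤ ‖x‖ := by
    rw [one_div, Real.rpow_inv_le_iff_of_pos (by positivity) (norm_nonneg x) hpq.pos]
    exact lp.sum_rpow_le_norm_rpow hpq.pos x s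
  calc ‖(∑ i ∈ s, L i ∘L lp.evalCLM 𝕜 E p i) x‖
      = ‖∑ i ∈ s, L i (x i)‖ := by rw [sum_apply]; rfl
    _ ≤ ∑ i ∈ s, ‖L i‖ * ‖x i‖ := norm_sum_le_of_le s fun i _ ↦ (L i).le_opNorm (x i)
    _ ≤ (∑ i ∈ s, ‖L i‖ ^ q) ^ (1 / q) * (∑ i ∈ s, ‖x i‖ ^ p.toReal) ^ (1 / p.toReal) :=
        Real.inner_le_Lp_mul_Lq_of_nonneg s hpq.symm (fun _ _ ↦ norm_nonneg _)
          fun _ _ ↦ norm_nonneg _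
    _ ≤ (∑ i ∈ s, ‖L i‖ ^ q) ^ (1 / q) * ‖x‖ := by gcongr

lemma summable_comp_evalCLM [CompleteSpace F] (hpq : p.toReal.HolderConjugate q)
    (hL : Summable fun i ↦ ‖L i‖ ^ q) : Summable fun i ↦ L i ∘L lp.evalCLM 𝕜 E p i := by
  refine summable_iff_vanishing_norm.2 fun ε hε ↦ ?_
  obtain ⟨s, hs⟩ := summable_iff_vanishing_norm.1 hL (ε ^ q) (Real.rpow_pos_of_pos hε q)
  refine ⟨s, fun t hts ↦ (norm_sum_comp_evalCLM_le hpq t).trans_lt ?_⟩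
  rw [one_div, Real.rpow_inv_lt_iff_of_pos (by positivity) hε.le hpq.symm.pos]
  exact (le_abs_self _).trans_lt (hs t hts)

end LpDirectSum

section WeightedSums

variable {ι E : Type*} [NormedAddCommGroup E] [NormedSpace ℝ E]
  {N : ι → Submodule ℝ E} {w : ι → ℝ} {p : ℝ≥0∞}

/-- The `w`-weighted `ℓᵖ`-sum `{∑ᵢ wᵢ xᵢ | xᵢ ∈ Nᵢ, ∑ᵢ wᵢ ‖xᵢ‖ᵖ < ∞}` of a family of subspaces; for
`p = 2` and `Nᵢ = Mᵢᗮ` it is the set `A_w`. It is meant for `1 ≤ p < ∞`: at `p = ∞` the exponent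
`p.toReal` is `0`. -/
def weightedSums (N : ι → Submodule ℝ E) (w : ι → ℝ) (p : ℝ≥0∞) : Set E :=
  {y | ∃ x : ι → E, (∀ i, x i ∈ N i) ∧ (Summable fun i ↦ w i * ‖x i‖ ^ p.toReal) ∧
    y = ∑' i, w i • x i}

lemma iSup_subset_weightedSums (hw : ∀ i, 0 < w i) (hp : p.toReal ≠ 0) :
    ((⨆ i, N i : Submodule ℝ E) : Set E) ⊆ weightedSums N w p := by
  intro y hy
  obtain ⟨f, hfN, rfl⟩ := (Submodule.mem_iSup_iff_exists_finsupp _ y).1 hy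
  have hf : ∀ i ∉ f.support, f i = 0 := fun i ↦ Finsupp.notMem_support_iff.1
  refine ⟨fun i ↦ (w i)⁻¹ • f i, fun i ↦ (N i).smul_mem _ (hfN i),
    summable_of_ne_finset_zero (s := f.support) fun i hi ↦ ?_, ?_⟩
  · simp only [hf i hi, smul_zero, norm_zero, Real.zero_rpow hp, mul_zero]
  · simp only [smul_inv_smul₀ (hw _).ne']
    exact (tsum_eq_sum hf).symm

lemma weightedSums_subset_topologicalClosure_iSup :
    weightedSums N w p ⊆ (⨆ i, N i).topologicalClosure := by
  rintro _ ⟨x, hx, -, rfl⟩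
  exact tsum_mem (Submodule.isClosed_topologicalClosure _) fun i ↦
    Submodule.smul_mem _ _ (Submodule.le_topologicalClosure _ (Submodule.mem_iSup_of_mem i (hx i)))

/-- The `i`-th term `z ↦ wᵢ ^ (1 - 1/p) zᵢ` of the operator on the `ℓᵖ`-direct sum of the `Nᵢ` whose
range is `weightedSums N w p`: substituting `zᵢ = wᵢ ^ (1/p) xᵢ` absorbs the weight into the `ℓᵖ`
norm. -/
noncomputable def weightedSumsTerm (N : ι → Submodule ℝ E) (w : ι → ℝ) (p : ℝ≥0∞) [Fact (1 ≤ p)]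
    (i : ι) : lp (fun i ↦ N i) p →L[ℝ] E :=
  (w i ^ (1 - p.toReal⁻¹) • (N i).subtypeL) ∘L lp.evalCLM ℝ (fun i ↦ N i) p i

variable [Fact (1 ≤ p)]

lemma range_weightedSumsTerm_le (i : ι) : (weightedSumsTerm N w p i).range ≤ N i := by
  rintro _ ⟨z, rfl⟩
  exact (N i).smul_mem _ (z i).2

lemma summable_weightedSumsTerm [CompleteSpace E] (hw : ∀ i, 0 ≤ w i) (hws : Summable w)
    (hp : 1 < p.toReal) : Summable (weightedSumsTerm N w p) := by
  have hpq := Real.HolderConjugate.conjExponent hp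
  have norm_coeff_smul_rpow_le (i : ι) :
      ‖w i ^ (1 - p.toReal⁻¹) • (N i).subtypeL‖ ^ p.toReal.conjExponent ≤ w i := by
    have hwq := Real.rpow_nonneg (hw i) p.toReal.conjExponent⁻¹
    have norm_le : ‖w i ^ p.toReal.conjExponent⁻¹ • (N i).subtypeL‖ ≤
        w i ^ p.toReal.conjExponent⁻¹ :=
      ContinuousLinearMap.opNorm_le_bound _ hwq fun v ↦
        (norm_smul_of_nonneg hwq (v : E)).le
    rw [hpq.one_sub_inv]
    exact (Real.le_rpow_inv_iff_of_pos (ContinuousLinearMap.opNorm_nonneg _) (hw i)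
      hpq.symm.pos).1 norm_le
  exact summable_comp_evalCLM hpq
    (hws.of_nonneg_of_le (fun i ↦ by positivity) norm_coeff_smul_rpow_le)

lemma range_tsum_weightedSumsTerm [CompleteSpace E] (hw : ∀ i, 0 < w i) (hws : Summable w)
    (hp : 1 < p.toReal) :
    ((∑' i, weightedSumsTerm N w p i).range : Set E) = weightedSums N w p := by
  have hp₀ : 0 < p.toReal := one_pos.trans hp
  have tsum_term_apply (z : lp (fun i ↦ N i) p) :
      (∑' i, weightedSumsTerm N w p i) z = ∑' i, w i ^ (1 - p.toReal⁻¹) • (z i : E) :=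
    (ContinuousLinearMap.apply ℝ E z).map_tsum
      (summable_weightedSumsTerm (fun i ↦ (hw i).le) hws hp)
  have norm_weight_smul_rpow (i : ι) (v : E) :
      ‖w i ^ p.toReal⁻¹ • v‖ ^ p.toReal = w i * ‖v‖ ^ p.toReal := by
    rw [norm_smul, Real.norm_of_nonneg (Real.rpow_nonneg (hw i).le _),
      Real.mul_rpow (Real.rpow_nonneg (hw i).le _) (norm_nonneg v),
      Real.rpow_inv_rpow (hw i).le hp₀.ne']
  have smul_smul_weight (i : ι) (v : E) :
      w i ^ (1 - p.toReal⁻¹) • w i ^ p.toReal⁻¹ • v = w i • v := by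
    rw [smul_smul, ← Real.rpow_add (hw i), sub_add_cancel, Real.rpow_one]
  ext y
  constructor
  · rintro ⟨z, rfl⟩
    have hz (i : ι) : w i ^ p.toReal⁻¹ • (w i ^ p.toReal⁻¹)⁻¹ • (z i : E) = z i :=
      smul_inv_smul₀ (Real.rpow_pos_of_pos (hw i) _).ne' _
    refine ⟨fun i ↦ (w i ^ p.toReal⁻¹)⁻¹ • (z i : E), fun i ↦ (N i).smul_mem _ (z i).2, ?_, ?_⟩
    · simp only [← norm_weight_smul_rpow, hz]
      exact (lp.memℓp z).summable hp₀
    · simp only [← smul_smul_weight, hz]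
      exact tsum_term_apply z
  · rintro ⟨x, hxN, hx, rfl⟩
    let z : ∀ i, N i := fun i ↦ w i ^ p.toReal⁻¹ • ⟨x i, hxN i⟩
    have hz : Memℓp z p := memℓp_gen (hx.congr fun i ↦ (norm_weight_smul_rpow i (x i)).symm)
    exact ⟨⟨z, hz⟩, (tsum_term_apply _).trans (tsum_congr fun i ↦ smul_smul_weight i (x i))⟩

lemma isClosed_iSup_of_isClosed_weightedSums [CompleteSpace E] [∀ i, CompleteSpace (N i)]
    (hw : ∀ i, 0 < w i) (hws : Summable w) (hp : 1 < p.toReal)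
    (hclosed : IsClosed (weightedSums N w p)) :
    IsClosed ((⨆ i, N i : Submodule ℝ E) : Set E) := by
  set T := ∑' i, weightedSumsTerm N w p i
  have range_T : (T.range : Set E) = weightedSums N w p := range_tsum_weightedSumsTerm hw hws hp
  have iSup_le_range : ⨆ i, N i ≤ T.range := by
    rw [← SetLike.coe_subset_coe, range_T]
    exact iSup_subset_weightedSums hw (one_pos.trans hp).ne'
  have range_T_closed : IsClosed (T.range : Set E) := range_T ▸ hclosed
  have hasSum_T : HasSum (weightedSumsTerm N w p) T :=
    (summable_weightedSumsTerm (fun i ↦ (hw i).le) hws hp).hasSum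
  have range_eq : T.range = ⨆ i, (weightedSumsTerm N w p i).range :=
    range_eq_iSup_range_of_hasSum hasSum_T range_T_closed fun i ↦
      (range_weightedSumsTerm_le i).trans ((le_iSup N i).trans iSup_le_range)
  have range_le_iSup : T.range ≤ ⨆ i, N i :=
    range_eq.le.trans (iSup_mono range_weightedSumsTerm_le)
  rwa [iSup_le_range.antisymm range_le_iSup]

end WeightedSums

lemma orthogonal_iInf_eq_topologicalClosure_iSup {𝕜 H ι : Type*} [RCLike 𝕜]
    [NormedAddCommGroup H] [InnerProductSpace 𝕜 H] [CompleteSpace H]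
    (M : ι → Submodule 𝕜 H) [∀ i, CompleteSpace (M i)] :
    (⨅ i, M i)ᗮ = (⨆ i, (M i)ᗮ).topologicalClosure := by
  rw [← Submodule.orthogonal_orthogonal_eq_closure, ← Submodule.iInf_orthogonal]
  simp only [Submodule.orthogonal_orthogonal]

theorem stmt_16_general {E : Type*} [NormedAddCommGroup E] [NormedSpace ℝ E] [CompleteSpace E]
    {ι : Type*} (N : ι → Submodule ℝ E) [∀ i, CompleteSpace (N i)] {p : ℝ≥0∞} (hp : 1 < p)
    (hp_top : p ≠ ∞)
    (hlam : ∃ lam : ι → ℝ, (∀ i, 0 < lam i) ∧ Summable lam ∧ IsClosed (weightedSums N lam p)) :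
    ∀ ω : ι → ℝ, (∀ i, 0 < ω i) → Summable ω →
      IsClosed (weightedSums N ω p) ∧
        weightedSums N ω p = ((⨆ i, N i).topologicalClosure : Set E) := by
  obtain ⟨lam, hlam_pos, hlam_summable, hlam_closed⟩ := hlam
  intro ω hω_pos _
  have : Fact (1 ≤ p) := ⟨hp.le⟩
  have hp_real : 1 < p.toReal := by
    rwa [← ENNReal.toReal_one, ENNReal.toReal_lt_toReal ENNReal.one_ne_top hp_top]
  have hN := isClosed_iSup_of_isClosed_weightedSums hlam_pos hlam_summable hp_real hlam_closed
  have hω : weightedSums N ω p = ((⨆ i, N i).topologicalClosure : Set E) := by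
    refine weightedSums_subset_topologicalClosure_iSup.antisymm ?_
    rw [hN.submodule_topologicalClosure_eq]
    exact iSup_subset_weightedSums hω_pos (one_pos.trans hp_real).ne'
  exact ⟨hω ▸ Submodule.isClosed_topologicalClosure _, hω⟩

/-- If `A_λ` is closed in `H` for one weight family `λ`, then `A_ω`
is closed for every weight family `ω`, and in that case `A_ω = M^⊥` for each such `ω`. -/
theorem stmt_16 {H : Type*} [NormedAddCommGroup H] [InnerProductSpace ℝ H] [CompleteSpace H]
    {ι : Type*} [Countable ι] [Nonempty ι]
    (M : ι → Submodule ℝ H) [∀ i, CompleteSpace (M i)]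
    (hMnt : ∀ i, M i ≠ ⊥)
    (hlam : ∃ lam : ι → ℝ, (∀ i, 0 < lam i) ∧ HasSum lam 1 ∧
      IsClosed { y : H | ∃ x : ι → H, (∀ i, x i ∈ (M i)ᗮ) ∧
        (Summable fun i => lam i * ‖x i‖ ^ 2) ∧ y = ∑' i, lam i • x i }) :
    ∀ ω : ι → ℝ, (∀ i, 0 < ω i) → HasSum ω 1 →
      IsClosed { y : H | ∃ x : ι → H, (∀ i, x i ∈ (M i)ᗮ) ∧
        (Summable fun i => ω i * ‖x i‖ ^ 2) ∧ y = ∑' i, ω i • x i } ∧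
      { y : H | ∃ x : ι → H, (∀ i, x i ∈ (M i)ᗮ) ∧
        (Summable fun i => ω i * ‖x i‖ ^ 2) ∧ y = ∑' i, ω i • x i } =
        (((⨅ i, M i : Submodule ℝ H)ᗮ : Submodule ℝ H) : Set H) := by
  obtain ⟨lam, hlam_pos, hlam_sum, hlam_closed⟩ := hlam
  intro ω hω_pos hω_sum
  simpa only [orthogonal_iInf_eq_topologicalClosure_iSup, weightedSums, ENNReal.toReal_ofNat,
    Real.rpow_ofNat] using stmt_16_general (fun i ↦ (M i)ᗮ) ENNReal.one_lt_two ENNReal.ofNat_ne_top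
      ⟨lam, hlam_pos, hlam_sum.summable, by simpa [weightedSums] using hlam_closed⟩
      ω hω_pos hω_sum.summable
end
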